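/- If the initial configuration places exactly 2^n − 1 chips at the root (n ≥ 1), then every stable configuration reachable from it has exactly one chip at each node of levels 1, …, n and no chips at any other node. -/

import Mathlib

/-!
Let `t` be the claimed final configuration, and let `w v` be the number of times `v` would have to
fire to turn the initial configuration into `t`; counting the chips that must cross each edge gives
`w v = 2 ^ (m + 1) - 2 - m` with `m = n - level v` (truncated, so `w` vanishes from level `n` on).
The proof tracks the deficit `d = w - u`, where `u` counts the firings made so far. Throughout,
`c = t + Δ d`, where `(Δ d) v = 3 * d v - d (2 * v) - d (2 * v + 1) - d (parent v)`.

* Legality keeps `d ≥ 0` (`Balance.fire`): if `d i = 0` and `d ≥ 0` elsewhere, then `c i ≤ t i ≤ 1`,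
  so `i` cannot fire.
* Stability forces `d ≤ 0` (`Balance.nonpos`): above level `n` it reads `Δ d ≤ 1`, and climbing up
  from level `n`, where `d ≤ 0`, this shows that a positive `d v` satisfies
  `d v ≤ d (parent v) - 1`. This is impossible at the root, which is its own parent, and hence
  impossible everywhere.

Therefore `d = 0` at a stable configuration, that is, `c = t`.
-/

/-- The level of node `i` in the infinite binary tree: `⌊log₂ i⌋ + 1`. -/
def level (i : ℕ) : ℕ := Nat.log 2 i + 1

/-- The parent of node `i`; the root (node 1) is its own parent via the self-loop. -/
def parent (i : ℕ) : ℕ := if i = 1 then 1 else i / 2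

/-- Firing node `i`: it loses 3 chips and sends one chip to each of its left child `2i`,
its right child `2i+1`, and its parent (itself, when `i = 1`, via the self-loop). -/
def fire (i : ℕ) (c : ℕ → ℕ) : ℕ → ℕ := fun k =>
  (if k = i then c k - 3 else c k) + (if k = 2 * i then 1 else 0) +
    (if k = 2 * i + 1 then 1 else 0) + (if k = parent i then 1 else 0)

/-- Applying a sequence of firings. -/
def fireSeq : List ℕ → (ℕ → ℕ) → (ℕ → ℕ)
  | [], c => c
  | i :: l, c => fireSeq l (fire i c)

/-- A sequence of firings is legal if each fired node is a positive integer
holding at least 3 chips at the moment it fires. -/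
def LegalSeq : List ℕ → (ℕ → ℕ) → Prop
  | [], _ => True
  | i :: l, c => 1 ≤ i ∧ 3 ≤ c i ∧ LegalSeq l (fire i c)

/-- A configuration is stable if every node holds at most 2 chips. -/
def Stable (c : ℕ → ℕ) : Prop := ∀ i, 1 ≤ i → c i ≤ 2

/-- The initial configuration with `N` chips at the root. -/
def initial (N : ℕ) : ℕ → ℕ := fun k => if k = 1 then N else 0

/-- The claimed final configuration: one chip on each node of levels `1, …, n`. -/
def target (n v : ℕ) : ℤ := if level v ≤ n then 1 else 0

/-- The configuration `c` is `target n` plus the Laplacian of `d`, where `d v ≥ 0` is the number of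
firings of `v` still missing, and nodes of level at least `n` are never due to fire. -/
structure Balance (n : ℕ) (c : ℕ → ℕ) (d : ℕ → ℤ) : Prop where
  eq : ∀ v, 1 ≤ v →
    (c v : ℤ) = target n v + 3 * d v - d (2 * v) - d (2 * v + 1) - d (parent v)
  nonneg : ∀ v, 1 ≤ v → 0 ≤ d v
  low : ∀ v, 1 ≤ v → n ≤ level v → d v ≤ 0

lemma level_left (v : ℕ) (hv : 1 ≤ v) : level (2 * v) = level v + 1 := by
  unfold level
  rw [mul_comm, Nat.log_mul_base (by norm_num) (by omega)]

lemma level_right (v : ℕ) (hv : 1 ≤ v) : level (2 * v + 1) = level v + 1 := by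
  unfold level
  rw [Nat.log_of_one_lt_of_le (by norm_num) (by omega)]
  congr 2
  congr 1
  omega

lemma level_half (v : ℕ) (hv : 2 ≤ v) : level v = level (v / 2) + 1 := by
  unfold level
  rw [Nat.log_of_one_lt_of_le (by norm_num) hv]

lemma target_le_one (n v : ℕ) : target n v ≤ 1 := by
  unfold target
  split_ifs <;> norm_num

lemma parent_pos (v : ℕ) (hv : 1 ≤ v) : 1 ≤ parent v := by
  unfold parent
  split_ifs <;> omega

/-- The number of firings of a node lying `m` levels above level `n`. -/
def odometer (m : ℕ) : ℤ := 2 ^ (m + 1) - 2 - m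

lemma odometer_nonneg (m : ℕ) : 0 ≤ odometer m := by
  unfold odometer
  have h : m + 1 < 2 ^ (m + 1) := Nat.lt_two_pow_self
  have h' : ((m + 1 : ℕ) : ℤ) + 1 ≤ 2 ^ (m + 1) := by exact_mod_cast h
  push_cast at h'
  linarith

lemma balance_initial (n : ℕ) (hn : 1 ≤ n) :
    Balance n (initial (2 ^ n - 1)) (fun v => odometer (n - level v)) where
  eq v hv := by
    simp only [level_left v hv, level_right v hv]
    rcases eq_or_lt_of_le hv with rfl | h2
    · obtain ⟨k, rfl⟩ : ∃ k, n = k + 1 := ⟨n - 1, by omega⟩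
      have h1 : level 1 = 1 := by simp [level]
      have hp : (1 : ℕ) ≤ 2 ^ (k + 1) := Nat.one_le_two_pow
      simp only [initial, target, parent, if_true, h1]
      push_cast [hp]
      rcases k with _ | k
      · simp [odometer]
      · have e : k + 1 - 1 = k := by omega
        simp only [odometer, e]
        push_cast
        ring
    · have hl := level_half v h2
      have hne : v ≠ 1 := by omega
      simp only [initial, target, parent, if_neg hne]
      rw [hl]
      generalize level (v / 2) = j
      -- the three cases: `v` above level `n`, at level `n`, below level `n`
      by_cases hj : j + 2 ≤ n
      · obtain ⟨r, rfl⟩ : ∃ r, n = j + 2 + r := ⟨n - (j + 2), by omega⟩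
        have e1 : j + 2 + r - (j + 1) = r + 1 := by omega
        have e2 : j + 2 + r - (j + 1 + 1) = r := by omega
        have e3 : j + 2 + r - j = r + 2 := by omega
        rw [e1, e2, e3, if_pos (by omega)]
        simp only [odometer]
        push_cast
        ring
      · have e1 : n - (j + 1) = 0 := by omega
        have e2 : n - (j + 1 + 1) = 0 := by omega
        rw [e1, e2]
        by_cases hj' : j + 1 ≤ n
        · have e3 : n - j = 1 := by omega
          rw [e3, if_pos hj']
          norm_num [odometer]
        · have e3 : n - j = 0 := by omega
          rw [e3, if_neg hj']
          norm_num [odometer]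
  nonneg v _ := odometer_nonneg _
  low v _ h := by
    have e : n - level v = 0 := by omega
    simp [e, odometer]

/-- A legal firing never exceeds the odometer (least action principle). -/
lemma Balance.fire {n i : ℕ} {c : ℕ → ℕ} {d : ℕ → ℤ} (h : Balance n c d) (hi : 1 ≤ i)
    (hc : 3 ≤ c i) :
    Balance n (fire i c) (fun v => d v - if v = i then 1 else 0) where
  eq v hv := by
    have e := h.eq v hv
    -- the neighbour relation is symmetric, the self-loop at the root included
    have key : ((if v = 2 * i then 1 else 0) + (if v = 2 * i + 1 then 1 else 0)
        + (if v = parent i then 1 else 0) : ℤ)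
        = (if 2 * v = i then 1 else 0) + (if 2 * v + 1 = i then 1 else 0)
        + (if parent v = i then 1 else 0) := by
      unfold parent
      grind
    have hsub : ((if v = i then c v - 3 else c v : ℕ) : ℤ)
        = c v - 3 * (if v = i then 1 else 0) := by
      split_ifs with hvi
      · subst hvi
        omega
      · simp
    unfold _root_.fire
    push_cast at hsub ⊢
    rw [hsub]
    linarith
  nonneg v hv := by
    have h0 := h.nonneg v hv
    by_cases hvi : v = i
    · subst hvi
      have e := h.eq v hv
      have h1 := h.nonneg (2 * v) (by omega)
      have h2 := h.nonneg (2 * v + 1) (by omega)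
      have h3 := h.nonneg (parent v) (parent_pos v hv)
      have h4 := target_le_one n v
      simp only [if_true]
      omega
    · simpa [hvi] using h0
  low v hv hl := by
    have := h.low v hv hl
    split_ifs <;> omega

lemma Balance.fireSeq {n : ℕ} (l : List ℕ) {c : ℕ → ℕ} {d : ℕ → ℤ} (h : Balance n c d)
    (hl : LegalSeq l c) : ∃ d', Balance n (fireSeq l c) d' := by
  induction l generalizing c d with
  | nil => exact ⟨d, h⟩
  | cons i l ih => exact ih (h.fire hl.1 hl.2.1) hl.2.2

/-- At a stable configuration a positive deficit drops strictly from parent to child.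
Induction on the number `m` of levels between `v` and level `n`. -/
lemma Balance.drop {n : ℕ} {c : ℕ → ℕ} {d : ℕ → ℤ} (h : Balance n c d) (hst : Stable c) (m : ℕ) :
    ∀ v, 1 ≤ v → n ≤ level v + m → d v ≤ 0 ∨ d v ≤ d (parent v) - 1 := by
  induction m with
  | zero => exact fun v hv hl => Or.inl (h.low v hv hl)
  | succ m ih =>
    intro v hv hl
    by_cases hn : n ≤ level v
    · exact Or.inl (h.low v hv hn)
    have e := h.eq v hv
    have hc := hst v hv
    have ht : target n v = 1 := by
      unfold target
      rw [if_pos (by omega)]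
    have i1 := ih (2 * v) (by omega) (by rw [level_left v hv]; omega)
    have i2 := ih (2 * v + 1) (by omega) (by rw [level_right v hv]; omega)
    have p1 : parent (2 * v) = v := by unfold parent; split_ifs <;> omega
    have p2 : parent (2 * v + 1) = v := by unfold parent; split_ifs <;> omega
    rw [p1] at i1
    rw [p2] at i2
    omega

lemma Balance.nonpos {n : ℕ} {c : ℕ → ℕ} {d : ℕ → ℤ} (h : Balance n c d) (hst : Stable c)
    (v : ℕ) (hv : 1 ≤ v) : d v ≤ 0 := by
  induction v using Nat.strong_induction_on with
  | _ v ih =>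
    have hd := h.drop hst n v hv (by omega)
    unfold parent at hd
    split_ifs at hd with h1
    · subst h1
      omega
    · have := ih (v / 2) (by omega) (by omega)
      omega

/-- If `2^n − 1` chips start at the root, then every reachable stable configuration has
exactly one chip at each node of levels `1, …, n` and no chips at any other node. -/
theorem stmt3 (n : ℕ) (hn : 1 ≤ n) (l : List ℕ)
    (hleg : LegalSeq l (initial (2 ^ n - 1)))
    (hst : Stable (fireSeq l (initial (2 ^ n - 1)))) :
    ∀ v, 1 ≤ v →
      fireSeq l (initial (2 ^ n - 1)) v = if level v ≤ n then 1 else 0 := by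
  intro v hv
  obtain ⟨d, hd⟩ := (balance_initial n hn).fireSeq l hleg
  have hz : ∀ u, 1 ≤ u → d u = 0 := fun u hu => le_antisymm (hd.nonpos hst u hu) (hd.nonneg u hu)
  have e := hd.eq v hv
  rw [hz v hv, hz (2 * v) (by omega), hz (2 * v + 1) (by omega),
    hz (parent v) (parent_pos v hv)] at e
  unfold target at e
  split_ifs at e ⊢ <;> omega
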